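/- arXiv:1811.12757 — 2 statements merged into one kernel-verified Lean document; each statement's English description precedes it below -/
import Mathlib

section
/- Let k ≥ 1, β ∈ (0, min(2,k)), and S(t,x) the heat kernel on ℝ^k. There exists a constant C₀ > 0 such that for all t > 0 and x, y ∈ ℝ^k, ∫_{ℝ^k} ‖z‖^{-β} |S(t, x+z) - S(t, y+z)| dz ≤ C₀ · t^{-β/2} · min(‖x-y‖/t^{1/2}, 1). -/
open Real MeasureTheory

noncomputable def heatKernel (k : ℕ) (t : ℝ) (x : EuclideanSpace ℝ (Fin k)) : ℝ :=
  (2 * Real.pi * t) ^ (-(k : ℝ) / 2) * Real.exp (-‖x‖ ^ 2 / (2 * t))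

lemma aux_lip (a b : ℝ) : |rexp (-a ^ 2 / 4) - rexp (-b ^ 2 / 4)| ≤ |a - b| := by
  have hd : ∀ s : ℝ, HasDerivAt (fun s : ℝ => rexp (-s ^ 2 / 4)) (rexp (-s ^ 2 / 4) * (-s / 2)) s := by
    intro s
    have h1 : HasDerivAt (fun s : ℝ => -s ^ 2 / 4) (-s / 2) s := by
      have := ((hasDerivAt_pow 2 s).neg).div_const 4
      exact this.congr_deriv (by push_cast; ring)
    exact h1.exp
  have hb : ∀ s : ℝ, ‖rexp (-s ^ 2 / 4) * (-s / 2)‖ ≤ 1 := by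
    intro s
    have h1 : s ^ 2 / 4 + 1 ≤ rexp (s ^ 2 / 4) := Real.add_one_le_exp _
    have h2 : rexp (-s ^ 2 / 4) * rexp (s ^ 2 / 4) = 1 := by
      rw [← Real.exp_add]; ring_nf; simp
    have h3 : |(-s / 2)| ≤ rexp (s ^ 2 / 4) := by
      rw [abs_le]; constructor <;> nlinarith [sq_nonneg (s / 2 - 1), sq_nonneg (s / 2 + 1)]
    rw [norm_mul, Real.norm_eq_abs, Real.norm_eq_abs, Real.abs_exp, ← h2]
    gcongr
  have := convex_univ.norm_image_sub_le_of_norm_hasDerivWithin_le (f := fun s : ℝ => rexp (-s ^ 2 / 4))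
    (C := 1) (fun s _ => (hd s).hasDerivWithinAt) (fun s _ => hb s) (Set.mem_univ b) (Set.mem_univ a)
  simpa [Real.norm_eq_abs] using this

lemma aux_diff {k : ℕ} (x y : EuclideanSpace ℝ (Fin k)) :
    |rexp (-‖x‖ ^ 2 / 2) - rexp (-‖y‖ ^ 2 / 2)| ≤
      min ‖x - y‖ 1 * (rexp (-‖x‖ ^ 2 / 4) + rexp (-‖y‖ ^ 2 / 4)) := by
  have hx : rexp (-‖x‖ ^ 2 / 2) = rexp (-‖x‖ ^ 2 / 4) ^ 2 := by
    rw [← Real.exp_nat_mul]; congr 1; push_cast; ring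
  have hy : rexp (-‖y‖ ^ 2 / 2) = rexp (-‖y‖ ^ 2 / 4) ^ 2 := by
    rw [← Real.exp_nat_mul]; congr 1; push_cast; ring
  have h1 := (aux_lip ‖x‖ ‖y‖).trans (abs_norm_sub_norm_le x y)
  have e1 := Real.exp_pos (-‖x‖ ^ 2 / 4)
  have e2 := Real.exp_pos (-‖y‖ ^ 2 / 4)
  have f1 : rexp (-‖x‖ ^ 2 / 4) ≤ 1 := Real.exp_le_one_iff.2 (by nlinarith [sq_nonneg ‖x‖])
  have f2 : rexp (-‖y‖ ^ 2 / 4) ≤ 1 := Real.exp_le_one_iff.2 (by nlinarith [sq_nonneg ‖y‖])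
  rw [hx, hy, sq_sub_sq, abs_mul, abs_of_pos (add_pos e1 e2), mul_comm]
  refine mul_le_mul_of_nonneg_right (le_min h1 ?_) (by positivity)
  rw [abs_le]; constructor <;> linarith

lemma aux_gauss (k : ℕ) :
    Integrable (fun z : EuclideanSpace ℝ (Fin k) => rexp (-‖z‖ ^ 2 / 4)) := by
  have := (GaussianFourier.integrable_cexp_neg_mul_sq_norm_add (V := EuclideanSpace ℝ (Fin k))
    (b := ((1 / 4 : ℝ) : ℂ)) (by norm_num) 0 0).norm
  refine this.congr (Filter.Eventually.of_forall fun z => ?_)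
  simp only [Complex.norm_exp]
  congr 1
  rw [zero_mul, add_zero, ← Complex.ofReal_neg, ← Complex.ofReal_pow, ← Complex.ofReal_mul,
    Complex.ofReal_re]
  ring

lemma aux_sing (k : ℕ) (hk : 1 ≤ k) (β : ℝ) (hβ2 : β < k) :
    Integrable ((Metric.closedBall (0 : EuclideanSpace ℝ (Fin k)) 1).indicator
      fun z => ‖z‖ ^ (-β)) := by
  rw [integrable_indicator_iff measurableSet_closedBall]
  have : LocallyIntegrable (fun z : EuclideanSpace ℝ (Fin k) => ‖z‖ ^ (-β)) := by
    refine locallyIntegrable_of_norm_le_rpow (C := 1) (α := β) (by simpa using hk)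
      (by simpa using hβ2) (Filter.Eventually.of_forall fun z => ?_) ?_
    · rw [one_mul, Real.norm_of_nonneg (by positivity)]
    · exact (measurable_norm.pow_const _).aestronglyMeasurable
  exact this.integrableOn_isCompact (isCompact_closedBall _ _)

lemma aux_one (k : ℕ) (hk : 1 ≤ k) (β : ℝ) (hβ : 0 < β) (hβ2 : β < k) :
    ∃ C : ℝ, 0 < C ∧ ∀ x y : EuclideanSpace ℝ (Fin k),
      ∫ z : EuclideanSpace ℝ (Fin k),
        ‖z‖ ^ (-β) * |heatKernel k 1 (x + z) - heatKernel k 1 (y + z)| ≤ C * min ‖x - y‖ 1 := by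
  set c : ℝ := (2 * Real.pi * 1) ^ (-(k : ℝ) / 2) with hc
  have hc0 : 0 < c := by positivity
  set F := (Metric.closedBall (0 : EuclideanSpace ℝ (Fin k)) 1).indicator
      fun z => ‖z‖ ^ (-β) with hF
  set G := fun z : EuclideanSpace ℝ (Fin k) => rexp (-‖z‖ ^ 2 / 4) with hG
  have iF : Integrable F := aux_sing k hk β hβ2
  have iG : Integrable G := aux_gauss k
  have F0 : ∀ z, 0 ≤ F z := fun z => Set.indicator_nonneg (fun z _ => by positivity) z
  have G0 : ∀ z, 0 < G z := fun z => Real.exp_pos _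
  have G1 : ∀ z, G z ≤ 1 := fun z => Real.exp_le_one_iff.2 (by nlinarith [sq_nonneg ‖z‖])
  have A0 : 0 ≤ ∫ z, F z := integral_nonneg F0
  have B0 : 0 ≤ ∫ z, G z := integral_nonneg fun z => (G0 z).le
  have key : ∀ z w, ‖z‖ ^ (-β) * G w ≤ F z + G w := by
    intro z w
    by_cases hz : z ∈ Metric.closedBall (0 : EuclideanSpace ℝ (Fin k)) 1
    · have : F z = ‖z‖ ^ (-β) := Set.indicator_of_mem hz _
      rw [this]
      have h0 : 0 ≤ ‖z‖ ^ (-β) := by positivity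
      nlinarith [G0 w, G1 w]
    · have h1 : ‖z‖ ^ (-β) ≤ 1 := by
        apply Real.rpow_le_one_of_one_le_of_nonpos _ (by linarith)
        simp at hz
        exact hz.le
      nlinarith [G0 w, F0 z]
  refine ⟨c * (2 * (∫ z, F z) + 2 * (∫ z, G z)) + 1, by positivity, fun x y => ?_⟩
  have hm : 0 ≤ min ‖x - y‖ 1 := by positivity
  have iGx : Integrable (fun z => G (x + z)) := iG.comp_add_left x
  have iGy : Integrable (fun z => G (y + z)) := iG.comp_add_left y
  have hpt : ∀ z, ‖z‖ ^ (-β) * |heatKernel k 1 (x + z) - heatKernel k 1 (y + z)| ≤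
      c * min ‖x - y‖ 1 * ((F z + G (x + z)) + (F z + G (y + z))) := by
    intro z
    have h := aux_diff (x + z) (y + z)
    rw [add_sub_add_right_eq_sub] at h
    have e : |heatKernel k 1 (x + z) - heatKernel k 1 (y + z)| =
        c * |rexp (-‖x + z‖ ^ 2 / 2) - rexp (-‖y + z‖ ^ 2 / 2)| := by
      simp only [heatKernel]
      rw [← mul_sub, abs_mul, abs_of_pos hc0]
      simp
    rw [e]
    calc ‖z‖ ^ (-β) * (c * |rexp (-‖x + z‖ ^ 2 / 2) - rexp (-‖y + z‖ ^ 2 / 2)|)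
        ≤ ‖z‖ ^ (-β) * (c * (min ‖x - y‖ 1 * (G (x + z) + G (y + z)))) := by gcongr
      _ = c * min ‖x - y‖ 1 * (‖z‖ ^ (-β) * G (x + z) + ‖z‖ ^ (-β) * G (y + z)) := by ring
      _ ≤ _ := by gcongr <;> apply key
  calc _ ≤ ∫ z, c * min ‖x - y‖ 1 * ((F z + G (x + z)) + (F z + G (y + z))) := by
        refine integral_mono_of_nonneg (Filter.Eventually.of_forall fun z => ?_) ?_
          (Filter.Eventually.of_forall hpt)
        · simp only [Pi.zero_apply]; positivity
        · exact ((iF.add iGx).add (iF.add iGy)).const_mul _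
    _ = c * min ‖x - y‖ 1 * (((∫ z, F z) + ∫ z, G z) + ((∫ z, F z) + ∫ z, G z)) := by
        have j1 : Integrable (fun z => F z + G (x + z)) := iF.add iGx
        have j2 : Integrable (fun z => F z + G (y + z)) := iF.add iGy
        rw [integral_const_mul, integral_add j1 j2, integral_add iF iGx,
          integral_add iF iGy, integral_add_left_eq_self G x, integral_add_left_eq_self G y]
    _ ≤ _ := by nlinarith

lemma aux_scale (k : ℕ) (t : ℝ) (ht : 0 < t) (w : EuclideanSpace ℝ (Fin k)) :
    heatKernel k t (√t • w) = t ^ (-(k : ℝ) / 2) * heatKernel k 1 w := by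
  simp only [heatKernel]
  rw [Real.mul_rpow (by positivity) ht.le, norm_smul, mul_pow, Real.norm_eq_abs, sq_abs,
    Real.sq_sqrt ht.le, mul_one, mul_one]
  have : -(t * ‖w‖ ^ 2) / (2 * t) = -‖w‖ ^ 2 / 2 := by field_simp
  rw [this]; ring

theorem stmt_8 (k : ℕ) (hk : 1 ≤ k) (β : ℝ) (hβ : 0 < β) (hβ2 : β < min 2 (k : ℝ)) :
    ∃ C₀ : ℝ, 0 < C₀ ∧
      ∀ t : ℝ, 0 < t → ∀ x y : EuclideanSpace ℝ (Fin k),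
        ∫ z : EuclideanSpace ℝ (Fin k),
            ‖z‖ ^ (-β) * |heatKernel k t (x + z) - heatKernel k t (y + z)| ≤
          C₀ * t ^ (-β / 2) * min (‖x - y‖ / t ^ ((1 : ℝ) / 2)) 1 := by
  obtain ⟨C, hC, h⟩ := aux_one k hk β hβ (hβ2.trans_le (min_le_right _ _))
  refine ⟨C, hC, fun t ht x y => ?_⟩
  have hs : 0 < √t := Real.sqrt_pos.2 ht
  have hx : ∀ x : EuclideanSpace ℝ (Fin k), √t • ((√t)⁻¹ • x) = x := fun x => by
    rw [smul_smul, mul_inv_cancel₀ hs.ne', one_smul]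
  have h1 := h ((√t)⁻¹ • x) ((√t)⁻¹ • y)
  rw [← smul_sub, norm_smul, norm_inv, Real.norm_of_nonneg hs.le, inv_mul_eq_div] at h1
  have h2 := Measure.integral_comp_smul (volume : Measure (EuclideanSpace ℝ (Fin k)))
    (fun z => ‖z‖ ^ (-β) * |heatKernel k t (x + z) - heatKernel k t (y + z)|) (√t)
  have h3 : ∀ z : EuclideanSpace ℝ (Fin k),
      ‖√t • z‖ ^ (-β) * |heatKernel k t (x + √t • z) - heatKernel k t (y + √t • z)| =
      (t ^ (-β / 2) * t ^ (-(k : ℝ) / 2)) * (‖z‖ ^ (-β) *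
        |heatKernel k 1 ((√t)⁻¹ • x + z) - heatKernel k 1 ((√t)⁻¹ • y + z)|) := by
    intro z
    have ex : x + √t • z = √t • ((√t)⁻¹ • x + z) := by rw [smul_add, hx]
    have ey : y + √t • z = √t • ((√t)⁻¹ • y + z) := by rw [smul_add, hx]
    rw [ex, ey, aux_scale k t ht, aux_scale k t ht, ← mul_sub, abs_mul, abs_of_pos (by positivity),
      norm_smul, Real.norm_of_nonneg hs.le, Real.mul_rpow hs.le (norm_nonneg _),
      Real.sqrt_eq_rpow, ← Real.rpow_mul ht.le]
    rw [show (1 / 2 : ℝ) * -β = -β / 2 by ring]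
    ring
  simp only [h3] at h2
  rw [integral_const_mul, finrank_euclideanSpace_fin, abs_of_pos (by positivity), smul_eq_mul] at h2
  have h4 : (√t ^ k)⁻¹ = t ^ (-(k : ℝ) / 2) := by
    rw [Real.sqrt_eq_rpow, ← Real.rpow_natCast, ← Real.rpow_mul ht.le, ← Real.rpow_neg ht.le]
    congr 1; ring
  rw [h4, mul_comm (t ^ (-β / 2)), mul_assoc] at h2
  have h5 := mul_left_cancel₀ (by positivity) h2
  rw [← h5, ← Real.sqrt_eq_rpow]
  calc _ ≤ t ^ (-β / 2) * (C * min (‖x - y‖ / √t) 1) := by gcongr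
    _ = _ := by ring
end

section
/- Let k ≥ 1, β ∈ (0, min(2,k)), and S(t,x) the heat kernel on ℝ^k. There exists a constant C > 0 such that for all t ≥ 0, δ ≥ 0 and x ∈ ℝ^k, ∫_0^t dr ∫_{ℝ^k} dz ∫_{ℝ^k} dv ‖z-v‖^{-β} |S(r+δ, x-z) - S(r, x-z)| · |S(r+δ, x-v) - S(r, x-v)| ≤ C δ^{(2-β)/2}. -/
open Real MeasureTheory

lemma aux_bern (k : ℕ) {u : ℝ} (hu0 : 0 < u) (hu1 : u ≤ 1) :
    1 - u ^ ((k : ℝ) / 2) ≤ k * (1 - u) := by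
  have h1 : u ^ (k : ℝ) ≤ u ^ ((k : ℝ) / 2) :=
    Real.rpow_le_rpow_of_exponent_ge hu0 hu1 (by have : (0:ℝ) ≤ k := Nat.cast_nonneg k
                                                 linarith)
  rw [Real.rpow_natCast] at h1
  have h2 := one_add_mul_le_pow (show (-2 : ℝ) ≤ u - 1 by linarith) k
  rw [show 1 + (u - 1) = u by ring] at h2
  linarith

lemma aux_exp {a b : ℝ} : Real.exp (-a) - Real.exp (-b) ≤ (b - a) * Real.exp (-a) := by
  have h := Real.add_one_le_exp (-(b - a))
  have : Real.exp (-b) = Real.exp (-a) * Real.exp (-(b - a)) := by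
    rw [← Real.exp_add]; ring_nf
  rw [this]
  nlinarith [Real.exp_pos (-a)]

lemma aux_xexp {a : ℝ} : a * Real.exp (-a) ≤ 2 * Real.exp (-(a / 2)) := by
  have h := Real.add_one_le_exp (a / 2)
  have : Real.exp (-(a/2)) = Real.exp (-a) * Real.exp (a/2) := by
    rw [← Real.exp_add]; ring_nf
  rw [this]
  nlinarith [Real.exp_pos (-a)]

lemma aux_pt (k : ℕ) {r δ : ℝ} (hr : 0 < r) (hδ : 0 ≤ δ) (y : EuclideanSpace ℝ (Fin k)) :
    |heatKernel k (r + δ) y - heatKernel k r y| ≤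
      ((2 * Real.pi) ^ (-(k : ℝ) / 2) * (k + 4)) * (δ / (r + δ)) *
       (r ^ (-(k : ℝ) / 2) * Real.exp (-‖y‖ ^ 2 / (4 * r)) +
        (r + δ) ^ (-(k : ℝ) / 2) * Real.exp (-‖y‖ ^ 2 / (4 * (r + δ)))) := by
  unfold heatKernel
  set s := r + δ with hs
  have hs0 : 0 < s := by linarith
  have hrs : r ≤ s := by linarith
  rw [Real.mul_rpow (by positivity) hs0.le, Real.mul_rpow (by positivity) hr.le]
  have hc : 0 < (2 * Real.pi) ^ (-(k : ℝ) / 2) := by positivity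
  set c := (2 * Real.pi) ^ (-(k : ℝ) / 2)
  set P := ‖y‖ ^ 2 with hP
  have hP0 : 0 ≤ P := by positivity
  have hk0 : (0:ℝ) ≤ k := Nat.cast_nonneg k
  have hR : 0 < r ^ (-(k : ℝ) / 2) := by positivity
  have hS : 0 < s ^ (-(k : ℝ) / 2) := by positivity
  have hm0 : 0 ≤ δ / s := by positivity
  have hmu : 1 - r / s = δ / s := by rw [hs]; field_simp; ring
  -- prefactor
  have h1 : r ^ (-(k : ℝ) / 2) - s ^ (-(k : ℝ) / 2) ≤ k * (δ / s) * r ^ (-(k : ℝ) / 2) := by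
    have := aux_bern k (u := r / s) (by positivity) ((div_le_one hs0).2 hrs)
    have e : s ^ (-(k : ℝ) / 2) = (r / s) ^ ((k:ℝ)/2) * r ^ (-(k : ℝ) / 2) := by
      rw [Real.div_rpow hr.le hs0.le, neg_div, Real.rpow_neg hr.le, Real.rpow_neg hs0.le]
      field_simp
    rw [e]
    rw [hmu] at this
    nlinarith
  have h1' : s ^ (-(k : ℝ) / 2) ≤ r ^ (-(k : ℝ) / 2) :=
    Real.rpow_le_rpow_of_nonpos hr hrs (by linarith)
  -- exponent
  have hE1 : Real.exp (-P / (2 * r)) ≤ Real.exp (-P / (2 * s)) := by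
    apply Real.exp_le_exp.2
    rw [neg_div, neg_div, neg_le_neg_iff]
    gcongr
  have hE2 : Real.exp (-P / (2 * s)) - Real.exp (-P / (2 * r)) ≤
      4 * (δ / s) * Real.exp (-P / (4 * s)) := by
    have hle : Real.exp (-P / (2 * s)) ≤ Real.exp (-P / (4 * s)) := by
      apply Real.exp_le_exp.2
      rw [neg_div, neg_div, neg_le_neg_iff]
      gcongr
      linarith
    have hp := Real.exp_pos (-P / (2 * r))
    have hq := Real.exp_pos (-P / (4 * s))
    rcases le_total r δ with h | h
    · have : 1 / 2 ≤ δ / s := by rw [div_le_div_iff₀ (by norm_num) hs0]; linarith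
      nlinarith
    · have a1 := aux_exp (a := P / (2 * s)) (b := P / (2 * r))
      have a2 := aux_xexp (a := P / (2 * s))
      have e1 : P / (2 * s) / 2 = P / (4 * s) := by field_simp; ring
      rw [e1] at a2
      rw [← neg_div, ← neg_div] at a1
      rw [← neg_div, ← neg_div] at a2
      have e2 : P / (2 * r) - P / (2 * s) = δ / r * (P / (2 * s)) := by
        rw [hs]; field_simp; ring
      rw [e2] at a1
      have : δ / r ≤ 2 * (δ / s) := by
        rw [← mul_div_assoc, div_le_div_iff₀ hr hs0]; nlinarith
      have hd : 0 ≤ δ / r := by positivity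
      calc _ ≤ δ / r * (P / (2 * s) * Real.exp (-P / (2 * s))) := by linarith
        _ ≤ δ / r * (2 * Real.exp (-P / (4 * s))) := by gcongr
        _ ≤ (2 * (δ / s)) * (2 * Real.exp (-P / (4 * s))) := by gcongr
        _ = _ := by ring
  have hle : Real.exp (-P / (2 * r)) ≤ Real.exp (-P / (4 * r)) := by
    apply Real.exp_le_exp.2
    rw [neg_div, neg_div, neg_le_neg_iff]
    gcongr
    linarith
  have hq := Real.exp_pos (-P / (4 * s))
  have hq' := Real.exp_pos (-P / (4 * r))
  have hq'' := Real.exp_pos (-P / (2 * r))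
  set R := r ^ (-(k : ℝ) / 2)
  set S := s ^ (-(k : ℝ) / 2)
  set A := Real.exp (-P / (2 * r))
  set B := Real.exp (-P / (2 * s))
  set A' := Real.exp (-P / (4 * r))
  set B' := Real.exp (-P / (4 * s))
  have e : c * S * B - c * R * A = c * (S * (B - A) - (R - S) * A) := by ring
  rw [e, abs_mul, abs_of_pos hc]
  have t1 : 0 ≤ S * (B - A) := mul_nonneg hS.le (by linarith)
  have t2 : 0 ≤ (R - S) * A := mul_nonneg (by linarith) hq''.le
  have t3 : S * (B - A) ≤ S * (4 * (δ / s) * B') := by gcongr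
  have t4 : (R - S) * A ≤ (k * (δ / s) * R) * A' := by gcongr
  have t5 : |S * (B - A) - (R - S) * A| ≤ (k + 4) * (δ / s) * (R * A' + S * B') := by
    have u1 : 0 ≤ (δ / s) * (R * A') := by positivity
    have u2 : 0 ≤ k * ((δ / s) * (S * B')) := by positivity
    rw [abs_le]
    constructor <;> nlinarith
  calc _ ≤ c * ((k + 4) * (δ / s) * (R * A' + S * B')) := by gcongr
    _ = _ := by ring

lemma aux_int (k : ℕ) (hk : 1 ≤ k) {γ : ℝ} (h : γ < k) :
    Integrable (fun w : EuclideanSpace ℝ (Fin k) => ‖w‖ ^ (-γ) * Real.exp (-‖w‖ ^ 2 / 4)) := by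
  have : Nontrivial (EuclideanSpace ℝ (Fin k)) := by
    have : Nonempty (Fin k) := ⟨⟨0, hk⟩⟩
    infer_instance
  have key := (integrable_fun_norm_addHaar (volume : Measure (EuclideanSpace ℝ (Fin k)))
    (f := fun y : ℝ => y ^ (-γ) * Real.exp (-y ^ 2 / 4))).2
  apply key
  have h2 := integrableOn_rpow_mul_exp_neg_mul_sq (b := 1 / 4) (by norm_num)
    (s := (k : ℝ) - 1 - γ) (by linarith)
  refine h2.congr_fun (fun y hy => ?_) measurableSet_Ioi
  have hy : 0 < y := hy
  simp only [finrank_euclideanSpace, Fintype.card_fin, smul_eq_mul]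
  rw [← Real.rpow_natCast y (k - 1), ← mul_assoc, ← Real.rpow_add hy, Nat.cast_sub hk, Nat.cast_one]
  congr 2 <;> ring

lemma aux_scale_s11 (k : ℕ) {Φ : EuclideanSpace ℝ (Fin k) → ℝ} (hΦ : Integrable Φ) {a : ℝ}
    (ha : 0 < a) (c : EuclideanSpace ℝ (Fin k)) :
    Integrable (fun v => a ^ (-(k : ℝ) / 2) * Φ ((Real.sqrt a)⁻¹ • (c - v))) ∧
    ∫ v, a ^ (-(k : ℝ) / 2) * Φ ((Real.sqrt a)⁻¹ • (c - v)) = ∫ v, Φ v := by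
  have hs : 0 < Real.sqrt a := Real.sqrt_pos.2 ha
  have h1 := (integrable_comp_smul_iff volume Φ (inv_ne_zero hs.ne')).2 hΦ
  constructor
  · exact (h1.comp_sub_left c).const_mul _
  · rw [integral_const_mul, integral_sub_left_eq_self (fun v => Φ ((Real.sqrt a)⁻¹ • v)) volume c,
      Measure.integral_comp_smul]
    simp only [finrank_euclideanSpace, Fintype.card_fin, smul_eq_mul]
    rw [inv_pow, inv_inv, abs_of_pos (by positivity), ← mul_assoc, Real.sqrt_eq_rpow,
      ← Real.rpow_natCast, ← Real.rpow_mul ha.le, ← Real.rpow_add ha]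
    rw [show -(k:ℝ)/2 + 1/2 * k = 0 by ring]
    simp

lemma aux_near {β q p : ℝ} (hβ : 0 < β) (hq : 0 ≤ q) :
    q ^ (-β) * Real.exp (-p ^ 2 / 4) ≤
      Real.exp 1 * (q ^ (-β) * Real.exp (-q ^ 2 / 4)) + p ^ (-(0:ℝ)) * Real.exp (-p ^ 2 / 4) := by
  have hp : Real.exp (-p ^ 2 / 4) ≤ 1 := Real.exp_le_one_iff.2 (by nlinarith [sq_nonneg p])
  have hp0 := Real.exp_pos (-p ^ 2 / 4)
  have hq0 : 0 ≤ q ^ (-β) := by positivity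
  simp only [neg_zero, Real.rpow_zero, one_mul]
  rcases le_total q 1 with h | h
  · have : 1 ≤ Real.exp 1 * Real.exp (-q ^ 2 / 4) := by
      rw [← Real.exp_add]
      apply Real.one_le_exp
      nlinarith
    nlinarith
  · have h1 : q ^ (-β) ≤ 1 := Real.rpow_le_one_of_one_le_of_nonpos h (by linarith)
    have : 0 ≤ Real.exp 1 * (q ^ (-β) * Real.exp (-q ^ 2 / 4)) := by positivity
    nlinarith

lemma aux_time {β : ℝ} (hβ : 0 < β) (hβ2 : β < 2) :
    IntegrableOn (fun u : ℝ => (1 / (u + 1)) ^ 2 * u ^ (-β / 2)) (Set.Ioi 0) := by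
  have hm : Measurable (fun u : ℝ => (1 / (u + 1)) ^ 2 * u ^ (-β / 2)) := by fun_prop
  rw [← Set.Ioc_union_Ioi_eq_Ioi (zero_le_one' ℝ)]
  apply IntegrableOn.union
  · have h : IntegrableOn (fun u : ℝ => u ^ (-β / 2)) (Set.Ioc 0 1) := by
      have := (intervalIntegral.intervalIntegrable_rpow' (a := 0) (b := 1) (r := -β / 2)
        (by linarith))
      rwa [intervalIntegrable_iff_integrableOn_Ioc_of_le zero_le_one] at this
    refine Integrable.mono' h hm.aestronglyMeasurable ?_
    filter_upwards [ae_restrict_mem measurableSet_Ioc] with u hu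
    have hu0 : 0 < u := hu.1
    rw [Real.norm_of_nonneg (by positivity)]
    have : (1 / (u + 1)) ^ 2 ≤ 1 := by
      apply pow_le_one₀ (by positivity)
      rw [div_le_one (by linarith)]; linarith
    exact mul_le_of_le_one_left (by positivity) this
  · have h := integrableOn_Ioi_rpow_of_lt (a := -2) (by norm_num) one_pos
    refine Integrable.mono' h hm.aestronglyMeasurable ?_
    filter_upwards [ae_restrict_mem measurableSet_Ioi] with u hu
    have hu1 : 1 < u := hu
    have hu0 : 0 < u := by linarith
    rw [Real.norm_of_nonneg (by positivity)]
    have h1 : u ^ (-β / 2) ≤ 1 := Real.rpow_le_one_of_one_le_of_nonpos hu1.le (by linarith)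
    have h2 : (1 / (u + 1)) ^ 2 ≤ u ^ (-2 : ℝ) := by
      rw [Real.rpow_neg hu0.le, Real.rpow_two, ← inv_pow, one_div]
      gcongr
      linarith
    calc _ ≤ (1 / (u + 1)) ^ 2 * 1 := by gcongr
      _ ≤ _ := by linarith

lemma aux_time2 {β δ : ℝ} (hβ : 0 < β) (hβ2 : β < 2) (hδ : 0 < δ) :
    IntegrableOn (fun r : ℝ => (δ / (r + δ)) ^ 2 * r ^ (-β / 2)) (Set.Ioi 0) ∧
    ∫ r in Set.Ioi (0:ℝ), (δ / (r + δ)) ^ 2 * r ^ (-β / 2) =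
      (∫ u in Set.Ioi (0:ℝ), (1 / (u + 1)) ^ 2 * u ^ (-β / 2)) * δ ^ ((2 - β) / 2) := by
  have e : ∀ u ∈ Set.Ioi (0:ℝ), δ ^ (-β / 2) * ((1 / (u + 1)) ^ 2 * u ^ (-β / 2)) =
      (fun r : ℝ => (δ / (r + δ)) ^ 2 * r ^ (-β / 2)) (δ * u) := by
    intro u hu
    have hu : 0 < u := hu
    simp only
    rw [Real.mul_rpow hδ.le hu.le, show δ / (δ * u + δ) = 1 / (u + 1) by field_simp]
    ring
  constructor
  · have := (integrableOn_Ioi_comp_mul_left_iff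
      (fun r : ℝ => (δ / (r + δ)) ^ 2 * r ^ (-β / 2)) 0 hδ).1
      (IntegrableOn.congr_fun ((aux_time hβ hβ2).const_mul (δ ^ (-β / 2))) e measurableSet_Ioi)
    simpa using this
  · have := integral_comp_mul_left_Ioi' (fun r : ℝ => (δ / (r + δ)) ^ 2 * r ^ (-β / 2)) 0 hδ
    rw [mul_zero] at this
    rw [← this, ← setIntegral_congr_fun measurableSet_Ioi e, integral_const_mul, smul_eq_mul,
      ← mul_assoc, mul_comm]
    congr 1
    rw [show (2 - β) / 2 = 1 + -β / 2 by ring, Real.rpow_add hδ, Real.rpow_one]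

lemma aux_gauss_s11 (k : ℕ) {a : ℝ} (ha : 0 < a) (y : EuclideanSpace ℝ (Fin k)) :
    Real.exp (-‖y‖ ^ 2 / (4 * a)) = ‖(Real.sqrt a)⁻¹ • y‖ ^ (-(0:ℝ)) *
      Real.exp (-‖(Real.sqrt a)⁻¹ • y‖ ^ 2 / 4) := by
  rw [neg_zero, Real.rpow_zero, one_mul, norm_smul, norm_inv,
    Real.norm_of_nonneg (Real.sqrt_nonneg a), mul_pow, inv_pow, Real.sq_sqrt ha.le]
  congr 1
  field_simp

/-- one Gaussian against the Riesz kernel -/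
lemma aux_riesz (k : ℕ) {β : ℝ} (hβ : 0 < β) {a : ℝ} (ha : 0 < a)
    (x z v : EuclideanSpace ℝ (Fin k)) :
    ‖z - v‖ ^ (-β) * (a ^ (-(k : ℝ) / 2) * Real.exp (-‖x - v‖ ^ 2 / (4 * a))) ≤
    a ^ (-β / 2) * (Real.exp 1 * (a ^ (-(k : ℝ) / 2) *
       (‖(Real.sqrt a)⁻¹ • (z - v)‖ ^ (-β) * Real.exp (-‖(Real.sqrt a)⁻¹ • (z - v)‖ ^ 2 / 4))) +
      a ^ (-(k : ℝ) / 2) *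
       (‖(Real.sqrt a)⁻¹ • (x - v)‖ ^ (-(0:ℝ)) *
        Real.exp (-‖(Real.sqrt a)⁻¹ • (x - v)‖ ^ 2 / 4))) := by
  have h := aux_near (β := β) (q := ‖(Real.sqrt a)⁻¹ • (z - v)‖)
    (p := ‖(Real.sqrt a)⁻¹ • (x - v)‖) hβ (norm_nonneg _)
  have e : ‖z - v‖ ^ (-β) = a ^ (-β / 2) * ‖(Real.sqrt a)⁻¹ • (z - v)‖ ^ (-β) := by
    rw [norm_smul, norm_inv, Real.norm_of_nonneg (Real.sqrt_nonneg a),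
      Real.mul_rpow (by positivity) (norm_nonneg _), Real.inv_rpow (Real.sqrt_nonneg a),
      Real.rpow_neg (Real.sqrt_nonneg a), inv_inv, Real.sqrt_eq_rpow, ← Real.rpow_mul ha.le,
      ← mul_assoc, ← Real.rpow_add ha, show -β / 2 + 1 / 2 * β = 0 by ring, Real.rpow_zero,
      one_mul]
  rw [aux_gauss_s11 k ha, e]
  have e2 : ‖(Real.sqrt a)⁻¹ • (x - v)‖ ^ (-(0:ℝ)) = 1 := by simp
  rw [e2] at h ⊢
  have hA : 0 ≤ a ^ (-β / 2) * a ^ (-(k : ℝ) / 2) := by positivity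
  have := mul_le_mul_of_nonneg_left h hA
  refine le_of_eq_of_le ?_ (this.trans_eq ?_) <;> ring

theorem stmt_11 (k : ℕ) (hk : 1 ≤ k) (β : ℝ) (hβ : 0 < β) (hβ2 : β < min 2 (k : ℝ)) :
    ∃ C : ℝ, 0 < C ∧
      ∀ t δ : ℝ, 0 ≤ t → 0 ≤ δ → ∀ x : EuclideanSpace ℝ (Fin k),
        (∫ r in Set.Ioo (0:ℝ) t, ∫ z : EuclideanSpace ℝ (Fin k),
            ∫ v : EuclideanSpace ℝ (Fin k),
              ‖z - v‖ ^ (-β) * |heatKernel k (r + δ) (x - z) - heatKernel k r (x - z)| *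
                |heatKernel k (r + δ) (x - v) - heatKernel k r (x - v)|) ≤
          C * δ ^ ((2 - β) / 2) := by
  have hb2 : β < 2 := hβ2.trans_le (min_le_left _ _)
  have hbk : β < k := hβ2.trans_le (min_le_right _ _)
  have hk0 : (0:ℝ) < k := by exact_mod_cast hk
  set N : EuclideanSpace ℝ (Fin k) → ℝ :=
    fun w => ‖w‖ ^ (-β) * Real.exp (-‖w‖ ^ 2 / 4) with hN
  set G : EuclideanSpace ℝ (Fin k) → ℝ :=
    fun w => ‖w‖ ^ (-(0:ℝ)) * Real.exp (-‖w‖ ^ 2 / 4) with hG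
  have iN : Integrable N := aux_int k hk hbk
  have iG : Integrable G := aux_int k hk hk0
  set n := ∫ w, N w with hn
  set g := ∫ w, G w with hg
  have n0 : 0 ≤ n := integral_nonneg fun w => by simp only [hN]; positivity
  have g0 : 0 ≤ g := integral_nonneg fun w => by simp only [hG]; positivity
  set c : ℝ := (2 * Real.pi) ^ (-(k : ℝ) / 2) * (k + 4) with hc
  have c0 : 0 < c := by positivity
  set K := Real.exp 1 * n + g with hK
  have K0 : 0 ≤ K := by positivity
  set T := ∫ u in Set.Ioi (0:ℝ), (1 / (u + 1)) ^ 2 * u ^ (-β / 2) with hT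
  have T0 : 0 ≤ T := setIntegral_nonneg measurableSet_Ioi fun u hu => by
    have : 0 < u := hu
    positivity
  refine ⟨4 * c ^ 2 * K * g * T + 1, by positivity, ?_⟩
  intro t δ ht hδ x
  rcases hδ.eq_or_lt with rfl | hδ0
  · simp only [add_zero, sub_self, abs_zero, mul_zero, integral_zero]
    positivity
  obtain ⟨ti, te⟩ := aux_time2 hβ hb2 hδ0
  -- fixed r
  have inner : ∀ r : ℝ, 0 < r → ∀ z : EuclideanSpace ℝ (Fin k),
      ∫ v : EuclideanSpace ℝ (Fin k),
        ‖z - v‖ ^ (-β) * |heatKernel k (r + δ) (x - z) - heatKernel k r (x - z)| *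
          |heatKernel k (r + δ) (x - v) - heatKernel k r (x - v)| ≤
      (2 * c * K * (δ / (r + δ)) * r ^ (-β / 2)) *
        (c * (δ / (r + δ)) * (r ^ (-(k:ℝ) / 2) * G ((Real.sqrt r)⁻¹ • (x - z)) +
          (r + δ) ^ (-(k:ℝ) / 2) * G ((Real.sqrt (r + δ))⁻¹ • (x - z)))) := by
    intro r hr z
    have hs : 0 < r + δ := by linarith
    set F := |heatKernel k (r + δ) (x - z) - heatKernel k r (x - z)| with hF
    have F0 : 0 ≤ F := abs_nonneg _
    have FB : F ≤ (c * (δ / (r + δ)) * (r ^ (-(k:ℝ) / 2) * G ((Real.sqrt r)⁻¹ • (x - z)) +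
          (r + δ) ^ (-(k:ℝ) / 2) * G ((Real.sqrt (r + δ))⁻¹ • (x - z)))) := by
      have := aux_pt k hr hδ (x - z)
      rwa [aux_gauss_s11 k hr, aux_gauss_s11 k hs] at this
    have bnd : ∀ a : ℝ, 0 < a → Integrable (fun v : EuclideanSpace ℝ (Fin k) =>
        a ^ (-β / 2) * (Real.exp 1 * (a ^ (-(k : ℝ) / 2) * N ((Real.sqrt a)⁻¹ • (z - v))) +
          a ^ (-(k : ℝ) / 2) * G ((Real.sqrt a)⁻¹ • (x - v)))) ∧
        ∫ v : EuclideanSpace ℝ (Fin k),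
        a ^ (-β / 2) * (Real.exp 1 * (a ^ (-(k : ℝ) / 2) * N ((Real.sqrt a)⁻¹ • (z - v))) +
          a ^ (-(k : ℝ) / 2) * G ((Real.sqrt a)⁻¹ • (x - v))) = a ^ (-β / 2) * K := by
      intro a ha
      obtain ⟨i1, e1⟩ := aux_scale_s11 k iN ha z
      obtain ⟨i2, e2⟩ := aux_scale_s11 k iG ha x
      refine ⟨((i1.const_mul _).add i2).const_mul _, ?_⟩
      rw [integral_const_mul, integral_add (i1.const_mul _) i2, integral_const_mul, e1, e2]
    obtain ⟨j1, f1⟩ := bnd r hr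
    obtain ⟨j2, f2⟩ := bnd (r + δ) hs
    have step := integral_mono_of_nonneg (μ := (volume : Measure (EuclideanSpace ℝ (Fin k))))
      (f := fun v => ‖z - v‖ ^ (-β) * F *
          |heatKernel k (r + δ) (x - v) - heatKernel k r (x - v)|)
      (Filter.Eventually.of_forall fun v => by
        show 0 ≤ ‖z - v‖ ^ (-β) * F * |heatKernel k (r + δ) (x - v) - heatKernel k r (x - v)|
        positivity)
      ((j1.add j2).const_mul (F * (c * (δ / (r + δ)))))
      (Filter.Eventually.of_forall fun v => by
        have p := aux_pt k hr hδ (x - v)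
        have q1 := aux_riesz k hβ hr x z v
        have q2 := aux_riesz k hβ hs x z v
        have hZ : 0 ≤ ‖z - v‖ ^ (-β) := by positivity
        have hM : 0 ≤ F * (c * (δ / (r + δ))) := by positivity
        refine le_trans (mul_le_mul_of_nonneg_left p (mul_nonneg hZ F0)) ?_
        refine le_of_eq_of_le ?_ (mul_le_mul_of_nonneg_left (add_le_add q1 q2) hM)
        ring)
    refine step.trans ?_
    rw [integral_const_mul]
    simp only [Pi.add_apply]
    rw [integral_add j1 j2, f1, f2]
    have hmon : (r + δ) ^ (-β / 2) ≤ r ^ (-β / 2) :=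
      Real.rpow_le_rpow_of_nonpos hr (by linarith) (by linarith)
    have hcd : 0 ≤ c * (δ / (r + δ)) := by positivity
    calc _ ≤ F * (c * (δ / (r + δ))) * (r ^ (-β / 2) * K + r ^ (-β / 2) * K) := by gcongr
      _ = (2 * c * K * (δ / (r + δ)) * r ^ (-β / 2)) * F := by ring
      _ ≤ _ := by gcongr
  have middle : ∀ r : ℝ, 0 < r →
      ∫ z : EuclideanSpace ℝ (Fin k), ∫ v : EuclideanSpace ℝ (Fin k),
        ‖z - v‖ ^ (-β) * |heatKernel k (r + δ) (x - z) - heatKernel k r (x - z)| *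
          |heatKernel k (r + δ) (x - v) - heatKernel k r (x - v)| ≤
      (4 * c ^ 2 * K * g) * ((δ / (r + δ)) ^ 2 * r ^ (-β / 2)) := by
    intro r hr
    have hs : 0 < r + δ := by linarith
    obtain ⟨i1, e1⟩ := aux_scale_s11 k iG hr x
    obtain ⟨i2, e2⟩ := aux_scale_s11 k iG hs x
    refine (integral_mono_of_nonneg (Filter.Eventually.of_forall fun z =>
      integral_nonneg fun v => ?_) (((i1.add i2).const_mul _).const_mul _)
      (Filter.Eventually.of_forall (inner r hr))).trans ?_
    · simp only [Pi.zero_apply]; positivity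
    · rw [integral_const_mul, integral_const_mul]
      simp only [Pi.add_apply]
      rw [integral_add i1 i2, e1, e2]
      apply le_of_eq
      ring
  have tI : IntegrableOn (fun r : ℝ => (4 * c ^ 2 * K * g) * ((δ / (r + δ)) ^ 2 * r ^ (-β / 2)))
    (Set.Ioi 0) := ti.const_mul _
  have fin1 := integral_mono_of_nonneg (μ := volume.restrict (Set.Ioo 0 t))
    (f := fun r => ∫ z : EuclideanSpace ℝ (Fin k), ∫ v : EuclideanSpace ℝ (Fin k),
        ‖z - v‖ ^ (-β) * |heatKernel k (r + δ) (x - z) - heatKernel k r (x - z)| *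
          |heatKernel k (r + δ) (x - v) - heatKernel k r (x - v)|)
    (Filter.Eventually.of_forall fun r => integral_nonneg fun z => integral_nonneg fun v => by
      simp only [Pi.zero_apply]; positivity)
    (tI.mono_set Set.Ioo_subset_Ioi_self)
    (by filter_upwards [ae_restrict_mem measurableSet_Ioo] with r hr using middle r hr.1)
  refine fin1.trans ((setIntegral_mono_set tI ?_
    (Filter.Eventually.of_forall Set.Ioo_subset_Ioi_self)).trans ?_)
  · filter_upwards [ae_restrict_mem measurableSet_Ioi] with r hr
    have hr : 0 < r := hr
    simp only [Pi.zero_apply]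
    positivity
  · rw [integral_const_mul, te]
    have : 0 ≤ δ ^ ((2 - β) / 2) := by positivity
    nlinarith
end
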